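/- Let v be quasi-definite with SMOP (P_n) and associated first-kind polynomials (P^{(1)}_n), let c ∈ ℂ, and let v̂ with (x−c)v̂ = v be quasi-definite with SMOP (P̂_n) (so v̂_0 ≠ 0 and v_0·P^{(1)}_{n−1}(c) + v̂_0·P_n(c) ≠ 0 for all n ≥ 1). Let P̂^{(1)}_{n−1}(x) = (1/v̂_0)⟨v̂_y, (P̂_n(x) − P̂_n(y))/(x−y)⟩ be the associated polynomials of the first kind of v̂, set S_n(x) = P_n(x) + (v_0/v̂_0)·P^{(1)}_{n−1}(x), and ℓ_n = −(v_0·P^{(1)}_{n−1}(c) + v̂_0·P_n(c))/(v_0·P^{(1)}_{n−2}(c) + v̂_0·P_{n−1}(c)). Then for all n ≥ 1: (x−c)·P̂^{(1)}_{n−1}(x) = S_n(x) + ℓ_n·S_{n−1}(x). -/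

import Mathlib

open Polynomial

noncomputable section

/-- Apply a linear functional (identified with its moment sequence) to a polynomial:
`⟨u, p⟩ = Σ_k c_k u_k` for `p = Σ_k c_k x^k`. -/
def fapply (u : ℕ → ℂ) (p : Polynomial ℂ) : ℂ := p.sum fun k ck => ck * u k

/-- `P` is the sequence of monic orthogonal polynomials (SMOP) of the functional `u`. -/
def IsSMOP (u : ℕ → ℂ) (P : ℕ → Polynomial ℂ) : Prop :=
  (∀ n, (P n).Monic) ∧ (∀ n, (P n).natDegree = n) ∧
    (∀ n m, n ≠ m → fapply u (P n * P m) = 0) ∧ (∀ n, fapply u (P n * P n) ≠ 0)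

/-- A functional is quasi-definite iff it admits a SMOP. -/
def IsQuasiDefinite (u : ℕ → ℂ) : Prop := ∃ P, IsSMOP u P

/-- Three term recurrence relation `x P_n = P_{n+1} + b_n P_n + a_n P_{n-1}`,
with `P_{-1} = 0`, `P_0 = 1`. -/
def HasTTRR (P : ℕ → Polynomial ℂ) (a b : ℕ → ℂ) : Prop :=
  P 0 = 1 ∧ X * P 0 = P 1 + C (b 0) * P 0 ∧
    ∀ n, 1 ≤ n → X * P n = P (n + 1) + C (b n) * P n + C (a n) * P (n - 1)

/-- Wronskian `W(p,q)(x) = p(x) q'(x) - p'(x) q(x)`. -/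
def Wr (p q : Polynomial ℂ) (x : ℂ) : ℂ :=
  p.eval x * (derivative q).eval x - (derivative p).eval x * q.eval x

/-- The monic Jacobi matrix with diagonal `b`, superdiagonal `1` and subdiagonal
entries `J_{n+1,n} = a_{n+1}`. -/
def jacobi (a b : ℕ → ℂ) (i j : ℕ) : ℂ :=
  if i = j then b i else if j = i + 1 then 1 else if i = j + 1 then a i else 0

/-- Entrywise product of semi-infinite (banded) matrices; the sum has finite support. -/
def mprod (A B : ℕ → ℕ → ℂ) (i j : ℕ) : ℂ := ∑' k, A i k * B k j

/-- `w` is the moment sequence of the inverse functional `u⁻¹`: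
the convolution of the moments of `u` and `w` is `(1,0,0,…)`. -/
def IsInverseMoments (u w : ℕ → ℂ) : Prop :=
  ∀ n, ∑ k ∈ Finset.range (n + 1), u k * w (n - k) = if n = 0 then 1 else 0

/-- Apply a functional `u` to the second (outer) variable `y` of a bivariate polynomial
`D = Σ_k q_k(x) y^k`, giving `Σ_k u_k q_k(x)`. -/
def fapplyY (u : ℕ → ℂ) (D : Polynomial (Polynomial ℂ)) : Polynomial ℂ :=
  D.sum fun k q => u k • q

/-- `P^{(1)}_{n-1}`, with the convention `P^{(1)}_{-1} = 0`. -/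
def P1prev (P1 : ℕ → Polynomial ℂ) (n : ℕ) : Polynomial ℂ :=
  if n = 0 then 0 else P1 (n - 1)

theorem fapply_add (u : ℕ → ℂ) (p q : Polynomial ℂ) :
    fapply u (p + q) = fapply u p + fapply u q := by
  unfold fapply
  exact Polynomial.sum_add_index p q _ (by simp) (by intros; ring)

theorem fapply_C_mul (u : ℕ → ℂ) (r : ℂ) (p : Polynomial ℂ) :
    fapply u (C r * p) = r * fapply u p := by
  unfold fapply
  rw [← smul_eq_C_mul, Polynomial.sum_smul_index _ _ _ (by simp), Polynomial.sum_def,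
    Polynomial.sum_def, Finset.mul_sum]
  exact Finset.sum_congr rfl (by intros; ring)

theorem fapply_sub (u : ℕ → ℂ) (p q : Polynomial ℂ) :
    fapply u (p - q) = fapply u p - fapply u q := by
  have h : p - q = p + C (-1) * q := by simp [sub_eq_add_neg]
  rw [h, fapply_add, fapply_C_mul]; ring

theorem fapply_zero (u : ℕ → ℂ) : fapply u 0 = 0 := by simp [fapply]

theorem fapply_monomial (u : ℕ → ℂ) (n : ℕ) (r : ℂ) : fapply u (monomial n r) = r * u n := by
  unfold fapply
  exact Polynomial.sum_monomial_index r _ (by simp)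

theorem fapply_ger (v vh : ℕ → ℂ) (c : ℂ) (hger : ∀ n, vh (n + 1) - c * vh n = v n)
    (p : Polynomial ℂ) : fapply vh ((X - C c) * p) = fapply v p := by
  induction p using Polynomial.induction_on' with
  | add p q hp hq => rw [mul_add, fapply_add, fapply_add, hp, hq]
  | monomial n r =>
    rw [sub_mul, fapply_sub, fapply_C_mul, X_mul_monomial]
    simp only [fapply_monomial]
    rw [← hger]; ring

theorem fapplyY_add (u : ℕ → ℂ) (p q : Polynomial (Polynomial ℂ)) :
    fapplyY u (p + q) = fapplyY u p + fapplyY u q := by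
  unfold fapplyY
  exact Polynomial.sum_add_index p q _ (by simp) (by intros; simp)

theorem fapplyY_C_mul (u : ℕ → ℂ) (r : Polynomial ℂ) (p : Polynomial (Polynomial ℂ)) :
    fapplyY u (C r * p) = r * fapplyY u p := by
  unfold fapplyY
  rw [← smul_eq_C_mul, Polynomial.sum_smul_index _ _ _ (by simp), Polynomial.sum_def,
    Polynomial.sum_def, Finset.mul_sum]
  exact Finset.sum_congr rfl (by intros; simp)

theorem fapplyY_sub (u : ℕ → ℂ) (p q : Polynomial (Polynomial ℂ)) :
    fapplyY u (p - q) = fapplyY u p - fapplyY u q := by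
  have h : p - q = p + C (-1) * q := by rw [C_neg, C_1]; ring
  rw [h, fapplyY_add, fapplyY_C_mul]; ring

theorem fapplyY_monomial (u : ℕ → ℂ) (n : ℕ) (r : Polynomial ℂ) :
    fapplyY u (monomial n r) = u n • r := by
  unfold fapplyY
  exact Polynomial.sum_monomial_index r _ (by simp)

theorem fapplyY_C (u : ℕ → ℂ) (r : Polynomial ℂ) :
    fapplyY u (C r) = C (u 0) * r := by
  rw [← monomial_zero_left, fapplyY_monomial, smul_eq_C_mul]

theorem fapplyY_map (u : ℕ → ℂ) (p : Polynomial ℂ) :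
    fapplyY u (p.map C) = C (fapply u p) := by
  induction p using Polynomial.induction_on' with
  | add p q hp hq => rw [Polynomial.map_add, fapplyY_add, fapply_add, hp, hq, C_add]
  | monomial n r =>
    rw [map_monomial, fapplyY_monomial, fapply_monomial, smul_eq_C_mul, C_mul, mul_comm]

theorem fapplyY_ger (v vh : ℕ → ℂ) (c : ℂ) (hger : ∀ n, vh (n + 1) - c * vh n = v n)
    (p : Polynomial (Polynomial ℂ)) :
    fapplyY vh ((X - C (C c)) * p) = fapplyY v p := by
  induction p using Polynomial.induction_on' with
  | add p q hp hq => rw [mul_add, fapplyY_add, fapplyY_add, hp, hq]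
  | monomial n r =>
    rw [sub_mul, fapplyY_sub, fapplyY_C_mul, X_mul_monomial]
    simp only [fapplyY_monomial]
    rw [← hger]
    simp only [smul_eq_C_mul, C_sub, C_mul]; ring

theorem exists_dd (p : Polynomial ℂ) : ∃ D : Polynomial (Polynomial ℂ),
    (C X - X) * D = C p - p.map C := by
  obtain ⟨D, hD⟩ := Polynomial.X_sub_C_dvd_sub_C_eval (a := (X : Polynomial ℂ)) (p := p.map C)
  have h : (p.map C).eval (X : Polynomial ℂ) = p := by
    rw [eval_map, eval₂_C_X]
  rw [h] at hD
  exact ⟨D, by linear_combination hD⟩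

def ddq (p : Polynomial ℂ) : Polynomial (Polynomial ℂ) := (exists_dd p).choose

theorem ddq_spec (p : Polynomial ℂ) : (C X - X) * ddq p = C p - p.map C :=
  (exists_dd p).choose_spec

theorem ddq_unique (p : Polynomial ℂ) (D : Polynomial (Polynomial ℂ))
    (h : (C X - X) * D = C p - p.map C) : D = ddq p := by
  have h0 : (C X - X : Polynomial (Polynomial ℂ)) ≠ 0 := by
    rw [← neg_ne_zero, neg_sub]
    exact X_sub_C_ne_zero _
  exact mul_left_cancel₀ h0 (h.trans (ddq_spec p).symm)

def Th (u : ℕ → ℂ) (p : Polynomial ℂ) : Polynomial ℂ := fapplyY u (ddq p)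

theorem Th_add (u : ℕ → ℂ) (p q : Polynomial ℂ) : Th u (p + q) = Th u p + Th u q := by
  unfold Th
  rw [← fapplyY_add, ← ddq_unique (p + q) (ddq p + ddq q)]
  rw [mul_add, ddq_spec, ddq_spec, C_add, Polynomial.map_add]; ring

theorem Th_C_mul (u : ℕ → ℂ) (r : ℂ) (p : Polynomial ℂ) : Th u (C r * p) = C r * Th u p := by
  unfold Th
  rw [← fapplyY_C_mul, ← ddq_unique (C r * p) (C (C r) * ddq p)]
  rw [mul_left_comm, ddq_spec, C_mul, Polynomial.map_mul, map_C]; ring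

theorem Th_X_mul (u : ℕ → ℂ) (p : Polynomial ℂ) :
    Th u (X * p) = X * Th u p + C (fapply u p) := by
  unfold Th
  rw [← fapplyY_C_mul, ← fapplyY_map, ← fapplyY_add,
    ← ddq_unique (X * p) (C X * ddq p + p.map C)]
  rw [mul_add, mul_left_comm, ddq_spec, C_mul, Polynomial.map_mul, map_X]; ring

theorem Th_one (u : ℕ → ℂ) : Th u 1 = 0 := by
  unfold Th
  rw [← ddq_unique 1 0 (by simp)]
  simp [fapplyY]

theorem Th_ger (v vh : ℕ → ℂ) (c : ℂ) (hger : ∀ n, vh (n + 1) - c * vh n = v n)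
    (p : Polynomial ℂ) :
    (X - C c) * Th vh p = C (vh 0) * p - C (fapply vh p) + Th v p := by
  unfold Th
  rw [← fapplyY_ger v vh c hger, ← fapplyY_C_mul, ← fapplyY_map, ← fapplyY_C, ← fapplyY_sub,
    ← fapplyY_add, ← ddq_spec]
  congr 1
  rw [C_sub]; ring

theorem smop_orth (u : ℕ → ℂ) (P : ℕ → Polynomial ℂ) (hP : IsSMOP u P) (n : ℕ) :
    ∀ m ≤ n, ∀ q : Polynomial ℂ, q.degree < (m : WithBot ℕ) → fapply u (P n * q) = 0 := by
  obtain ⟨hm, hd, ho, -⟩ := hP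
  intro m
  induction m with
  | zero =>
    intro _ q hq
    have : q = 0 := by
      ext k
      exact (degree_lt_iff_coeff_zero _ _).1 hq k (Nat.zero_le k)
    simp [this, fapply_zero]
  | succ m ih =>
    intro hmn q hq
    have key : (q - C (q.coeff m) * P m).degree < (m : WithBot ℕ) := by
      rw [degree_lt_iff_coeff_zero]
      intro k hk
      rcases hk.eq_or_lt with rfl | hk
      · have := (hm m).coeff_natDegree
        rw [hd] at this
        simp [this]
      · rw [coeff_sub, coeff_C_mul, (degree_lt_iff_coeff_zero _ _).1 hq k hk,
          coeff_eq_zero_of_natDegree_lt (p := P m) (by rw [hd]; exact hk)]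
        simp
    have h1 := ih (by omega) _ key
    have h2 : P n * q = P n * (q - C (q.coeff m) * P m) + C (q.coeff m) * (P n * P m) := by ring
    rw [h2, fapply_add, fapply_C_mul, h1, ho n m (by omega)]; ring

theorem smop_zero (u : ℕ → ℂ) (P : ℕ → Polynomial ℂ) (hP : IsSMOP u P) (n : ℕ)
    (q : Polynomial ℂ) (hq : q.degree < (n : WithBot ℕ))
    (h : ∀ r : Polynomial ℂ, r.degree < (n : WithBot ℕ) → fapply u (q * r) = 0) : q = 0 := by
  by_contra hne
  have hP' := hP
  obtain ⟨hm, hd, ho, hk⟩ := hP'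
  have hmn : q.natDegree < n := (natDegree_lt_iff_degree_lt hne).2 hq
  set m := q.natDegree with hmdef
  have hdeg : (P m).degree = m := by
    rw [degree_eq_natDegree (hm m).ne_zero, hd]
  have h1 := h (P m) (by rw [hdeg]; exact_mod_cast hmn)
  have key : (q - C (q.coeff m) * P m).degree < (m : WithBot ℕ) := by
    rw [degree_lt_iff_coeff_zero]
    intro k hk
    rcases hk.eq_or_lt with rfl | hk
    · have := (hm m).coeff_natDegree
      rw [hd] at this
      simp [this]
    · rw [coeff_sub, coeff_C_mul, coeff_eq_zero_of_natDegree_lt hk,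
        coeff_eq_zero_of_natDegree_lt (p := P m) (by rw [hd]; exact hk)]
      simp
  have h2 := smop_orth u P hP m m le_rfl _ key
  have h3 : q * P m = P m * (q - C (q.coeff m) * P m) + C (q.coeff m) * (P m * P m) := by ring
  rw [h3, fapply_add, fapply_C_mul, h2, zero_add] at h1
  rcases mul_eq_zero.1 h1 with h4 | h4
  · exact hne (leadingCoeff_eq_zero.1 h4)
  · exact hk m h4

theorem Th_P (v : ℕ → ℂ) (P : ℕ → Polynomial ℂ) (hP : IsSMOP v P)
    (a b : ℕ → ℂ) (hrec : HasTTRR P a b) (P1 : ℕ → Polynomial ℂ)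
    (hP1 : HasTTRR P1 (fun n => a (n + 1)) (fun n => b (n + 1))) :
    ∀ n, Th v (P n) = C (v 0) * P1prev P1 n ∧ Th v (P (n + 1)) = C (v 0) * P1prev P1 (n + 1) := by
  obtain ⟨r0, r1, r2⟩ := hrec
  obtain ⟨s0, s1, s2⟩ := hP1
  have hv1 : fapply v 1 = v 0 := by
    rw [← monomial_zero_one, fapply_monomial, one_mul]
  intro n
  induction n with
  | zero =>
    refine ⟨by simp [r0, Th_one, P1prev], ?_⟩
    have h : P 1 = X * P 0 + C (-(b 0)) * P 0 := by rw [r1, C_neg]; ring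
    rw [zero_add, h, Th_add, Th_C_mul, Th_X_mul, r0, Th_one, hv1]
    simp [P1prev, s0]
  | succ n ih =>
    refine ⟨ih.2, ?_⟩
    have h : P (n + 1 + 1) = X * P (n + 1) + (C (-(b (n + 1))) * P (n + 1) + C (-(a (n + 1))) * P n) := by
      have := r2 (n + 1) (by omega)
      rw [Nat.add_sub_cancel] at this
      rw [this, C_neg, C_neg]; ring
    have h0 : fapply v (P (n + 1)) = 0 := by
      have := hP.2.2.1 (n + 1) 0 (by omega)
      rwa [r0, mul_one] at this
    rw [h, Th_add, Th_add, Th_C_mul, Th_C_mul, Th_X_mul, h0, ih.1, ih.2, C_neg, C_neg, C_0]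
    rcases n with _ | n
    · simp only [P1prev]
      simp [s0] at s1 ⊢
      rw [s1]; ring
    · have := s2 (n + 1) (by omega)
      simp only [P1prev]
      simp at this ⊢
      linear_combination C (v 0) * this

/-- connection formula `(x-c) P̂^{(1)}_{n-1}(x) = S_n(x) + ℓ_n S_{n-1}(x)`
for `n ≥ 1`, where `S_n = P_n + (v_0/v̂_0) P^{(1)}_{n-1}` and `P̂^{(1)}_{n-1}` is defined by
applying `v̂` to the second variable of the divided difference of `P̂_n`. -/
theorem stmt_16 (v : ℕ → ℂ) (c : ℂ) (P : ℕ → Polynomial ℂ) (hP : IsSMOP v P)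
    (a b : ℕ → ℂ) (hrec : HasTTRR P a b) (ha : ∀ n, 1 ≤ n → a n ≠ 0)
    (P1 : ℕ → Polynomial ℂ)
    (hP1 : HasTTRR P1 (fun n => a (n + 1)) (fun n => b (n + 1)))
    (vh : ℕ → ℂ) (hger : ∀ n, vh (n + 1) - c * vh n = v n) (hvh0 : vh 0 ≠ 0)
    (hcond : ∀ n, 1 ≤ n → v 0 * (P1 (n - 1)).eval c + vh 0 * (P n).eval c ≠ 0)
    (Ph : ℕ → Polynomial ℂ) (hPh : IsSMOP vh Ph)
    (Dh : ℕ → Polynomial (Polynomial ℂ))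
    (hDh : ∀ n, 1 ≤ n →
      (Polynomial.C Polynomial.X - Polynomial.X) * Dh n
        = Polynomial.C (Ph n) - (Ph n).map Polynomial.C)
    (S : ℕ → Polynomial ℂ)
    (hS : ∀ n, S n = P n + C (v 0 / vh 0) * P1prev P1 n)
    (ell : ℕ → ℂ)
    (hell : ∀ n, 1 ≤ n → ell n =
      -(v 0 * (P1prev P1 n).eval c + vh 0 * (P n).eval c)
        / (v 0 * (P1prev P1 (n - 1)).eval c + vh 0 * (P (n - 1)).eval c)) :
    ∀ n, 1 ≤ n →
      (X - C c) * ((vh 0)⁻¹ • fapplyY vh (Dh n)) = S n + C (ell n) * S (n - 1) := by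
  have hmonic := hP.1
  have hdegP := hP.2.1
  have hTh := fun n => (Th_P v P hP a b hrec P1 hP1 n).1
  have hvP : ∀ n, fapply vh (P n) = v 0 * (P1prev P1 n).eval c + vh 0 * (P n).eval c := by
    intro n
    have h := congrArg (Polynomial.eval c) (Th_ger v vh c hger (P n))
    rw [hTh n] at h
    simp at h
    linear_combination h
  intro n hn
  have hden : v 0 * (P1prev P1 (n - 1)).eval c + vh 0 * (P (n - 1)).eval c ≠ 0 := by
    rcases Nat.lt_or_ge n 2 with h | h
    · have h1 : n - 1 = 0 := by omega
      rw [h1, hrec.1]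
      simpa [P1prev] using hvh0
    · have := hcond (n - 1) (by omega)
      have h1 : n - 1 ≠ 0 := by omega
      simpa only [P1prev, if_neg h1] using this
  have hdP : ∀ n, (P n).degree = (n : WithBot ℕ) := fun n => by
    rw [degree_eq_natDegree (hmonic n).ne_zero, hdegP]
  have hdPh : (Ph n).degree = (n : WithBot ℕ) := by
    rw [degree_eq_natDegree (hPh.1 n).ne_zero, hPh.2.1]
  have hQ0 : fapply vh (P n + C (ell n) * P (n - 1)) = 0 := by
    rw [fapply_add, fapply_C_mul, hvP, hvP, hell n hn]
    field_simp
    ring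
  have hPhQ : Ph n = P n + C (ell n) * P (n - 1) := by
    rw [← sub_eq_zero]
    apply smop_zero vh Ph hPh n
    · have h1 : (Ph n - P n).degree < (n : WithBot ℕ) := by
        have := degree_sub_lt_left (hdPh.trans (hdP n).symm) (hPh.1 n).ne_zero
          ((hPh.1 n).leadingCoeff.trans (hmonic n).leadingCoeff.symm)
        rwa [hdPh] at this
      have h2 : (C (ell n) * P (n - 1)).degree < (n : WithBot ℕ) := by
        rw [← smul_eq_C_mul]
        refine lt_of_le_of_lt (degree_smul_le _ _) ?_
        rw [hdP]
        exact_mod_cast (by omega : n - 1 < n)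
      rw [← sub_sub]
      exact lt_of_le_of_lt (degree_sub_le _ _) (max_lt h1 h2)
    · intro r hr
      have e1 := smop_orth vh Ph hPh n n le_rfl r hr
      obtain ⟨s, hs⟩ := Polynomial.X_sub_C_dvd_sub_C_eval (a := c) (p := r)
      have hsd : s.degree < ((n - 1 : ℕ) : WithBot ℕ) := by
        by_cases hs0 : s = 0
        · rw [hs0, degree_zero]; exact WithBot.bot_lt_coe _
        · rw [← natDegree_lt_iff_degree_lt hs0]
          have hlt : (r - C (r.eval c)).degree < (n : WithBot ℕ) := by
            refine lt_of_le_of_lt (degree_sub_le _ _) (max_lt hr ?_)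
            refine lt_of_le_of_lt degree_C_le ?_
            exact_mod_cast (by omega : 0 < n)
          rw [hs] at hlt
          have hne : (X - C c) * s ≠ 0 := mul_ne_zero (X_sub_C_ne_zero c) hs0
          rw [← natDegree_lt_iff_degree_lt hne,
            natDegree_mul (X_sub_C_ne_zero c) hs0, natDegree_X_sub_C] at hlt
          omega
      have e2 := smop_orth v P hP (n - 1) (n - 1) le_rfl s hsd
      have e3 := smop_orth v P hP n (n - 1) (by omega) s hsd
      have hsplit : (Ph n - (P n + C (ell n) * P (n - 1))) * r
          = Ph n * r - ((X - C c) * (P n * s + C (ell n) * (P (n - 1) * s))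
            + C (r.eval c) * (P n + C (ell n) * P (n - 1))) := by
        linear_combination (-(P n + C (ell n) * P (n - 1))) * hs
      rw [hsplit, fapply_sub, fapply_add, fapply_C_mul, hQ0, e1, fapply_ger v vh c hger,
        fapply_add, fapply_C_mul, e2, e3]
      ring
  have hD : fapplyY vh (Dh n) = Th vh (Ph n) := by
    unfold Th
    rw [ddq_unique _ _ (hDh n hn)]
  rw [hD, smul_eq_C_mul, mul_left_comm, Th_ger v vh c hger, hPhQ, hQ0, Th_add, Th_C_mul, hTh, hTh,
    hS, hS, div_eq_mul_inv, C_mul, C_0]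
  have hi : C (vh 0)⁻¹ * C (vh 0) = (1 : Polynomial ℂ) := by
    rw [← C_mul, inv_mul_cancel₀ hvh0, C_1]
  linear_combination (P n + C (ell n) * P (n - 1)) * hi
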